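/- arXiv:math/0506205 — 6 statements merged into one kernel-verified Lean document; each statement's English description precedes it below -/
import Mathlib

section
/- For every complex number z with Re z > 1, Kurepa's function satisfies the functional equation K(z) − K(z − 1) = Γ(z), where Γ is the complex Gamma function. -/
open MeasureTheory Set

/-- Kurepa's function `K(z) = ∫₀^∞ e^{-t} (t^z - 1)/(t - 1) dt`,
where `t^z = exp(z log t)` for `t > 0`. -/
noncomputable def kurepa (z : ℂ) : ℂ :=
  ∫ t in Ioi (0 : ℝ), (Real.exp (-t) : ℂ) * (((t : ℂ) ^ z - 1) / ((t : ℂ) - 1))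

/-! Since `(t^z - 1) - (t^(z-1) - 1) = t^(z-1) (t - 1)`, the integrands of `K(z)` and `K(z-1)`
differ by Euler's integrand `e^{-t} t^(z-1)`. Subtracting the integrals is legitimate because
`e^{-t} (t^w - 1)` is a difference of two Euler integrands, absolutely integrable for `Re w > -1`,
and its zero at `t = 1` absorbs the pole of `1/(t - 1)`. -/

open Filter Topology Asymptotics

section RemovableSingularity

variable {𝕜 E : Type*} [NormedField 𝕜] [MeasurableSpace 𝕜] [BorelSpace 𝕜]
  [SecondCountableTopology 𝕜] [NormedAddCommGroup E] [NormedSpace 𝕜 E]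
  {μ : Measure 𝕜} {f : 𝕜 → E} {a : 𝕜}

lemma integrableAtFilter_nhds_inv_sub_smul [IsLocallyFiniteMeasure μ]
    (hf : AEStronglyMeasurable f μ) (hfa : f =O[𝓝 a] fun t => t - a) :
    IntegrableAtFilter (fun t => (t - a)⁻¹ • f t) (𝓝 a) μ := by
  have hinv : Measurable fun t : 𝕜 => (t - a)⁻¹ := by fun_prop
  have hbdd : (fun t => (t - a)⁻¹ • f t) =O[𝓝 a] fun _ => (1 : ℝ) :=
    calc (fun t => (t - a)⁻¹ • f t)
      _ =O[𝓝 a] fun t => (t - a)⁻¹ • (t - a) := (isBigO_refl _ _).smul hfa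
      _ =O[𝓝 a] fun _ => (1 : ℝ) := isBigO_of_le _ fun t => by
        simpa only [smul_eq_mul, norm_mul, norm_inv, norm_one] using inv_mul_le_one
  exact hbdd.integrableAtFilter
    (hinv.aestronglyMeasurable.smul hf).stronglyMeasurableAtFilter
    (locallyIntegrable_const 1 a)

lemma integrableOn_compl_inv_sub_smul {u : Set 𝕜} (hf : Integrable f μ) (hu : u ∈ 𝓝 a) :
    IntegrableOn (fun t => (t - a)⁻¹ • f t) uᶜ μ := by
  obtain ⟨δ, hδ, hball⟩ := Metric.mem_nhds_iff.1 hu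
  have hinv : Measurable fun t : 𝕜 => (t - a)⁻¹ := by fun_prop
  have hbound : ∀ t ∈ (Metric.ball a δ)ᶜ, ‖(t - a)⁻¹‖ ≤ δ⁻¹ := fun t ht => by
    rw [norm_inv]
    gcongr
    simpa [dist_eq_norm] using ht
  have hfar : IntegrableOn (fun t => (t - a)⁻¹ • f t) (Metric.ball a δ)ᶜ μ :=
    hf.integrableOn.bdd_smul δ⁻¹ hinv.aestronglyMeasurable
      (ae_restrict_of_forall_mem Metric.isOpen_ball.measurableSet.compl hbound)
  exact hfar.mono_set (compl_subset_compl.2 hball)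

lemma integrable_inv_sub_smul [IsLocallyFiniteMeasure μ]
    (hf : Integrable f μ) (hfa : f =O[𝓝 a] fun t => t - a) :
    Integrable (fun t => (t - a)⁻¹ • f t) μ := by
  obtain ⟨u, hu, hnear⟩ := integrableAtFilter_nhds_inv_sub_smul hf.aestronglyMeasurable hfa
  have hfar := integrableOn_compl_inv_sub_smul hf hu
  rw [← integrableOn_univ, ← union_compl_self u]
  exact hnear.union hfar

end RemovableSingularity

lemma integrableOn_exp_neg_mul_cpow_sub_one {w : ℂ} (hw : -1 < w.re) :
    IntegrableOn (fun t : ℝ => (Real.exp (-t) : ℂ) * ((t : ℂ) ^ w - 1)) (Ioi 0) := by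
  have hpow := Complex.GammaIntegral_convergent (s := w + 1)
    (by rw [Complex.add_re, Complex.one_re]; linarith)
  have hone := Complex.GammaIntegral_convergent (s := 1) (by simp)
  simpa [mul_sub, Pi.sub_def] using hpow.sub hone

lemma isBigO_exp_neg_mul_cpow_sub_one (w : ℂ) :
    (fun t : ℝ => (Real.exp (-t) : ℂ) * ((t : ℂ) ^ w - 1)) =O[𝓝 1] fun t => t - 1 := by
  have hpow : DifferentiableAt ℝ (fun t : ℝ => (t : ℂ) ^ w) 1 :=
    ((hasDerivAt_id ((1 : ℝ) : ℂ)).cpow_const (by simp)).comp_ofReal.differentiableAt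
  have hexp : DifferentiableAt ℝ (fun t : ℝ => (Real.exp (-t) : ℂ)) 1 := by fun_prop
  simpa using (hexp.mul (hpow.sub_const 1)).isBigO_sub

lemma integrableOn_kurepa_integrand {w : ℂ} (hw : -1 < w.re) :
    IntegrableOn (fun t : ℝ => (Real.exp (-t) : ℂ) * (((t : ℂ) ^ w - 1) / ((t : ℂ) - 1)))
      (Ioi 0) := by
  refine (integrable_inv_sub_smul (integrableOn_exp_neg_mul_cpow_sub_one hw)
    (isBigO_exp_neg_mul_cpow_sub_one w)).congr (ae_of_all _ fun t => ?_)
  simp only [Complex.real_smul, Complex.ofReal_inv, Complex.ofReal_sub, Complex.ofReal_one]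
  ring

lemma cpow_sub_one_div_sub_cpow_sub_one_div {t : ℂ} (ht0 : t ≠ 0) (ht1 : t ≠ 1) (z : ℂ) :
    (t ^ z - 1) / (t - 1) - (t ^ (z - 1) - 1) / (t - 1) = t ^ (z - 1) := by
  have hpow : t ^ z = t ^ (z - 1) * t := by
    rw [Complex.cpow_sub _ _ ht0, Complex.cpow_one, div_mul_cancel₀ _ ht0]
  rw [← sub_div, div_eq_iff (sub_ne_zero.2 ht1), hpow]
  ring

theorem kurepa_functional_equation_general (z : ℂ) (hz : 0 < z.re) :
    kurepa z - kurepa (z - 1) = Complex.Gamma z := by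
  have hK := integrableOn_kurepa_integrand (w := z) (by linarith)
  have hKpred := integrableOn_kurepa_integrand (w := z - 1)
    (by rw [Complex.sub_re, Complex.one_re]; linarith)
  rw [kurepa, kurepa, ← integral_sub hK hKpred, Complex.Gamma_eq_integral hz,
    Complex.GammaIntegral]
  refine integral_congr_ae ?_
  filter_upwards [ae_restrict_mem measurableSet_Ioi, Measure.ae_ne _ 1] with t ht0 ht1
  rw [← mul_sub, cpow_sub_one_div_sub_cpow_sub_one_div
    (Complex.ofReal_ne_zero.2 (ne_of_gt ht0)) (Complex.ofReal_ne_one.2 ht1)]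

/-- For `Re z > 1`, Kurepa's function satisfies `K(z) - K(z-1) = Γ(z)`. -/
theorem kurepa_functional_equation (z : ℂ) (hz : 1 < z.re) :
    kurepa z - kurepa (z - 1) = Complex.Gamma z :=
  kurepa_functional_equation_general z (zero_lt_one.trans hz)
end

section
/- For every natural number n ≥ 1 and every complex number z ∉ {0, 1, …, n−1}, the rational functions Q_n defined by Q_1(z) = (z+1)/z, Q_2(z) = z/(z−1), and the recurrence Q_n(z) = ((z−n+2)/(z−n+1))·Q_{n−1}(z) − (1/(z−n+1))·Q_{n−2}(z) for n ≥ 3, satisfy the explicit formula Q_n(z) = 1 + Σ_{j=0}^{n−1} Π_{i=0}^{j} 1/(z − i). -/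
/-!
Since `(w + 1) / w = 1 + 1 / w`, the recurrence says that consecutive differences satisfy
`Q (k + 1) - Q k = (Q k - Q (k - 1)) / (z - k)`. As `Q 2 - Q 1 = 1 / (z * (z - 1))`, the difference
`Q k - Q (k - 1)` is the product of the `1 / (z - i)` over `i < k`, and these products telescope,
starting from `Q 1 = 1 + 1 / z`.
-/

open Finset

@[to_additive]
theorem eq_prod_range_of_succ_eq_mul {M : Type*} [CommMonoid M] {f g : ℕ → M} {a n : ℕ}
    (han : a ≤ n) (ha : f a = ∏ i ∈ range a, g i)
    (hsucc : ∀ k, a ≤ k → k < n → f (k + 1) = f k * g k) :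
    f n = ∏ i ∈ range n, g i := by
  induction n, han using Nat.le_induction with
  | base => exact ha
  | succ n han ih =>
    rw [hsucc n han n.lt_succ_self, ih fun k hak hkn ↦ hsucc k hak (hkn.trans n.lt_succ_self),
      prod_range_succ]

section Field

variable {K : Type*} [Field K]

theorem add_one_div_mul_sub_one_div_mul_sub {w : K} (hw : w ≠ 0) (x y : K) :
    (w + 1) / w * x - 1 / w * y - x = (x - y) * (1 / w) := by
  field_simp
  ring

theorem kurepa_rational_Q_sub_eq_prod {n : ℕ} (hn : 2 ≤ n) {z : K}
    (hz : ∀ m : ℕ, m < n → z ≠ m) {q : ℕ → K}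
    (hq1 : q 1 = (z + 1) / z) (hq2 : q 2 = z / (z - 1))
    (hqrec : ∀ m : ℕ, 3 ≤ m → m ≤ n →
      q m = (z - m + 2) / (z - m + 1) * q (m - 1) - 1 / (z - m + 1) * q (m - 2)) :
    q n - q (n - 1) = ∏ i ∈ range n, 1 / (z - i) := by
  refine eq_prod_range_of_succ_eq_mul (f := fun k ↦ q k - q (k - 1)) hn ?_ fun k hk hkn ↦ ?_
  · have hz0 : z ≠ 0 := by simpa using hz 0 (by lia)
    have hz1 : z - 1 ≠ 0 := sub_ne_zero.mpr (by simpa using hz 1 (by lia))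
    simp only [Nat.add_one_sub_one, hq1, hq2, prod_range_succ, prod_range_zero, Nat.cast_zero,
      Nat.cast_one, sub_zero]
    field_simp
    ring
  · have hrec : q (k + 1) = (z - k + 1) / (z - k) * q k - 1 / (z - k) * q (k - 1) := by
      convert hqrec (k + 1) (by lia) hkn using 4 <;> push_cast <;> ring
    rw [Nat.add_sub_cancel, hrec]
    exact add_one_div_mul_sub_one_div_mul_sub (sub_ne_zero.mpr (hz k hkn)) _ _

theorem kurepa_rational_Q_explicit_general (n : ℕ) (hn : 1 ≤ n) (z : K)
    (hz : ∀ m : ℕ, m < n → z ≠ m) (q : ℕ → K)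
    (hq1 : q 1 = (z + 1) / z) (hq2 : 2 ≤ n → q 2 = z / (z - 1))
    (hqrec : ∀ m : ℕ, 3 ≤ m → m ≤ n →
      q m = (z - m + 2) / (z - m + 1) * q (m - 1) - 1 / (z - m + 1) * q (m - 2)) :
    q n = 1 + ∑ j ∈ range n, ∏ i ∈ range (j + 1), 1 / (z - i) := by
  have hz0 : z ≠ 0 := by simpa using hz 0 hn
  have hbase : q 1 - 1 = ∑ j ∈ range 1, ∏ i ∈ range (j + 1), 1 / (z - i) := by
    simp [hq1, add_div, hz0]
  have hdiff (k : ℕ) (hk : 1 ≤ k) (hkn : k < n) :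
      q (k + 1) - q k = ∏ i ∈ range (k + 1), 1 / (z - i) :=
    kurepa_rational_Q_sub_eq_prod (by lia) (fun m hm ↦ hz m (by lia)) hq1 (hq2 (by lia))
      fun m hm hmk ↦ hqrec m hm (by lia)
  rw [← sub_eq_iff_eq_add']
  refine eq_sum_range_of_succ_eq_add (f := fun k ↦ q k - 1) hn hbase fun k hk hkn ↦ ?_
  rw [← hdiff k hk hkn]
  ring

end Field

/-- The rational functions `Q n` defined by `Q 1 z = (z+1)/z`, `Q 2 z = z/(z-1)`
and, for `3 ≤ m`, by
`Q m z = ((z-m+2)/(z-m+1)) Q (m-1) z - (1/(z-m+1)) Q (m-2) z`,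
satisfy the explicit formula `Q n z = 1 + ∑_{j=0}^{n-1} ∏_{i=0}^{j} 1/(z-i)`
for all `n ≥ 1` and `z ∉ {0, 1, …, n-1}`. -/
theorem kurepa_rational_Q_explicit (n : ℕ) (hn : 1 ≤ n) (z : ℂ)
    (hz : ∀ m : ℕ, m < n → z ≠ (m : ℂ))
    (Q : ℕ → ℂ → ℂ)
    (hQ1 : Q 1 z = (z + 1) / z)
    (hQ2 : 2 ≤ n → Q 2 z = z / (z - 1))
    (hQrec : ∀ m : ℕ, 3 ≤ m → m ≤ n →
      Q m z = ((z - (m : ℂ) + 2) / (z - (m : ℂ) + 1)) * Q (m - 1) z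
        - (1 / (z - (m : ℂ) + 1)) * Q (m - 2) z) :
    Q n z = 1 + ∑ j ∈ Finset.range n, ∏ i ∈ Finset.range (j + 1),
      (1 / (z - (i : ℂ))) :=
  kurepa_rational_Q_explicit_general n hn z hz (Q · z) hQ1 hQ2 hQrec
end

section
/- For every natural number n ≥ 1 and every complex number z ∉ {0, 1, …, n−1}, the rational functions R_n defined by R_1(z) = 1/z, R_2(z) = 1/(z−1), and the recurrence R_n(z) = ((z−n+2)/(z−n+1))·R_{n−1}(z) − (1/(z−n+1))·R_{n−2}(z) for n ≥ 3, satisfy the explicit formula R_n(z) = Σ_{j=0}^{n−1} Π_{i=0}^{j} 1/(z − i). -/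
/-!
The coefficients of the recurrence satisfy `(z - n + 2) / (z - n + 1) = 1 + 1 / (z - n + 1)`, so
consecutive differences obey `R n - R (n - 1) = (R (n - 1) - R (n - 2)) / (z - n + 1)` and are
therefore products of reciprocals, which telescope to the sum. With `R 0 = 0`, the prescribed value
of `R 2` is the case `n = 2` of the recurrence.
-/

section Recurrence

variable {A : Type*} [CommRing A] {u c : ℕ → A} {n : ℕ}

theorem sub_eq_prod_mul_of_recurrence
    (hu : ∀ k < n, u (k + 2) = (1 + c k) * u (k + 1) - c k * u k) :
    u (n + 1) - u n = (∏ i ∈ Finset.range n, c i) * (u 1 - u 0) := by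
  induction n with
  | zero => simp
  | succ n ih =>
    have ih := ih fun k hk => hu k (hk.trans n.lt_succ_self)
    calc u (n + 2) - u (n + 1)
        = c n * (u (n + 1) - u n) := by rw [hu n n.lt_succ_self]; ring
      _ = (∏ i ∈ Finset.range (n + 1), c i) * (u 1 - u 0) := by
        rw [ih, Finset.prod_range_succ]; ring

theorem eq_add_sum_prod_mul_of_recurrence
    (hu : ∀ k < n, u (k + 2) = (1 + c k) * u (k + 1) - c k * u k) :
    u (n + 1) =
      u 0 + (∑ j ∈ Finset.range (n + 1), ∏ i ∈ Finset.range j, c i) * (u 1 - u 0) := by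
  have hsub : ∀ j ∈ Finset.range (n + 1),
      (∏ i ∈ Finset.range j, c i) * (u 1 - u 0) = u (j + 1) - u j := fun j hj =>
    (sub_eq_prod_mul_of_recurrence fun k hk =>
      hu k (hk.trans_le (Finset.mem_range_succ_iff.mp hj))).symm
  rw [Finset.sum_mul, Finset.sum_congr rfl hsub, Finset.sum_range_sub, add_sub_cancel]

theorem eq_sum_prod_of_recurrence (hu₀ : u 0 = 0) (hu₁ : u 1 = c 0)
    (hu : ∀ k < n, u (k + 2) = (1 + c (k + 1)) * u (k + 1) - c (k + 1) * u k) :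
    u (n + 1) = ∑ j ∈ Finset.range (n + 1), ∏ i ∈ Finset.range (j + 1), c i := by
  simp_rw [Finset.prod_range_succ', ← Finset.sum_mul]
  rw [eq_add_sum_prod_mul_of_recurrence hu, hu₀, hu₁, zero_add, sub_zero]

end Recurrence

theorem kurepa_rational_R_explicit_general {K : Type*} [Field K] {n : ℕ} (hn : 1 ≤ n) {z : K}
    (hz : ∀ m : ℕ, m < n → z ≠ m) {R : ℕ → K}
    (hR1 : R 1 = 1 / z)
    (hR2 : 2 ≤ n → R 2 = 1 / (z - 1))
    (hRrec : ∀ m : ℕ, 3 ≤ m → m ≤ n →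
      R m = (z - m + 2) / (z - m + 1) * R (m - 1) - 1 / (z - m + 1) * R (m - 2)) :
    R n = ∑ j ∈ Finset.range n, ∏ i ∈ Finset.range (j + 1), 1 / (z - i) := by
  obtain ⟨n, rfl⟩ := Nat.exists_eq_add_of_le' hn
  let u : ℕ → K
    | 0 => 0
    | k + 1 => R (k + 1)
  have hu₁ : u 1 = 1 / (z - (0 : ℕ)) := by simpa using hR1
  refine eq_sum_prod_of_recurrence (u := u) rfl hu₁ fun k hk => ?_
  have hk₀ : z - (k + 1 : ℕ) ≠ 0 := sub_ne_zero.mpr (hz _ (Nat.succ_lt_succ hk))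
  rw [one_add_div hk₀]
  cases k with
  | zero =>
    have hz₀ : z ≠ 0 := by simpa using hz 0 n.succ_pos
    change R 2 = _ * R 1 - _ * 0
    rw [hR2 (Nat.succ_le_succ hk), hR1, mul_zero, sub_zero, zero_add, Nat.cast_one, sub_add_cancel,
      div_mul_div_cancel₀' hz₀]
  | succ k =>
    change R (k + 3) = _ * R (k + 2) - _ * R (k + 1)
    rw [hRrec (k + 3) (Nat.le_add_left 3 k) (Nat.succ_le_succ hk)]
    congr 3 <;> push_cast <;> ring

/-- The rational functions `R n` defined by `R 1 z = 1/z`, `R 2 z = 1/(z-1)`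
and, for `3 ≤ m`, by
`R m z = ((z-m+2)/(z-m+1)) R (m-1) z - (1/(z-m+1)) R (m-2) z`,
satisfy the explicit formula `R n z = ∑_{j=0}^{n-1} ∏_{i=0}^{j} 1/(z-i)`
for all `n ≥ 1` and `z ∉ {0, 1, …, n-1}`. -/
theorem kurepa_rational_R_explicit (n : ℕ) (hn : 1 ≤ n) (z : ℂ)
    (hz : ∀ m : ℕ, m < n → z ≠ (m : ℂ))
    (R : ℕ → ℂ → ℂ)
    (hR1 : R 1 z = 1 / z)
    (hR2 : 2 ≤ n → R 2 z = 1 / (z - 1))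
    (hRrec : ∀ m : ℕ, 3 ≤ m → m ≤ n →
      R m z = ((z - (m : ℂ) + 2) / (z - (m : ℂ) + 1)) * R (m - 1) z
        - (1 / (z - (m : ℂ) + 1)) * R (m - 2) z) :
    R n z = ∑ j ∈ Finset.range n, ∏ i ∈ Finset.range (j + 1),
      (1 / (z - (i : ℂ))) := by
  exact kurepa_rational_R_explicit_general (R := fun m => R m z) hn hz hR1 hR2 hRrec
end

section
/- For every natural number n ≥ 1 and every complex number z with Re z > n, Kurepa's function satisfies K(z) = K(z − n) + (Q_n(z) − 1) · Γ(z + 1), where Q_n(z) = 1 + Σ_{j=0}^{n−1} Π_{i=0}^{j} 1/(z − i) and Γ is the complex Gamma function. -/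
open MeasureTheory Set

/-- The rational function `Q n z = 1 + ∑_{j=0}^{n-1} ∏_{i=0}^{j} 1/(z-i)`. -/
noncomputable def kurepaQ (n : ℕ) (z : ℂ) : ℂ :=
  1 + ∑ j ∈ Finset.range n, ∏ i ∈ Finset.range (j + 1), (1 / (z - (i : ℂ)))

/-!
Since `t ^ (w + 1) - 1 = t ^ w * (t - 1) + (t ^ w - 1)`, integrating against `e ^ (-t) / (t - 1)`
gives the recurrence `K (w + 1) = K w + Γ (w + 1)`, and `n` such steps down from `z` collect
`∑ j < n, Γ (z - j)`. By the functional equation of `Γ`, each of these terms is the `j`-th summand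
of `Q n z - 1` times `Γ (z + 1)`.

The integral defining `K w` converges absolutely for `-1 < Re w`: the difference quotient is bounded
near `t = 1` and `O(t ^ Re w + 1)` elsewhere.
-/

theorem exists_norm_slope_le_mul_norm_add_one {𝕜 E : Type*} [NontriviallyNormedField 𝕜]
    [NormedAddCommGroup E] [NormedSpace 𝕜 E] {f : 𝕜 → E} {a : 𝕜} (hf : DifferentiableAt 𝕜 f a) :
    ∃ C, ∀ x, ‖slope f a x‖ ≤ C * (‖f x‖ + 1) := by
  obtain ⟨B, hB, hnear⟩ := hf.isBigO_sub.exists_pos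
  obtain ⟨δ, hδ, hball⟩ := Metric.eventually_nhds_iff.1 hnear.bound
  refine ⟨max B (δ⁻¹ * (1 + ‖f a‖)), fun x ↦ ?_⟩
  rw [slope_def_module, norm_smul, norm_inv]
  rcases lt_or_ge (dist x a) δ with hx | hx
  · calc ‖x - a‖⁻¹ * ‖f x - f a‖
        ≤ B := inv_mul_le_of_le_mul₀ (norm_nonneg _) hB.le (by linarith [hball hx])
      _ ≤ B * (‖f x‖ + 1) := le_mul_of_one_le_right hB.le (by simp)
      _ ≤ max B (δ⁻¹ * (1 + ‖f a‖)) * (‖f x‖ + 1) := by gcongr; exact le_max_left _ _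
  · rw [dist_eq_norm] at hx
    calc ‖x - a‖⁻¹ * ‖f x - f a‖
        ≤ δ⁻¹ * (‖f x‖ + ‖f a‖) := by gcongr; exact norm_sub_le _ _
      _ ≤ δ⁻¹ * ((1 + ‖f a‖) * (‖f x‖ + 1)) := by
          gcongr
          nlinarith [norm_nonneg (f x), norm_nonneg (f a)]
      _ = δ⁻¹ * (1 + ‖f a‖) * (‖f x‖ + 1) := by ring
      _ ≤ max B (δ⁻¹ * (1 + ‖f a‖)) * (‖f x‖ + 1) := by gcongr; exact le_max_right _ _

theorem exists_norm_cpow_sub_one_div_sub_one_le (w : ℂ) :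
    ∃ C, ∀ t : ℝ, 0 < t → ‖((t : ℂ) ^ w - 1) / ((t : ℂ) - 1)‖ ≤ C * (t ^ w.re + 1) := by
  have hdiff : DifferentiableAt ℂ (fun s : ℂ ↦ s ^ w) 1 :=
    differentiableAt_id.cpow_const (by simp)
  obtain ⟨C, hC⟩ := exists_norm_slope_le_mul_norm_add_one hdiff
  refine ⟨C, fun t ht ↦ ?_⟩
  simpa only [slope_def_field, Complex.one_cpow, Complex.norm_cpow_eq_rpow_re_of_pos ht]
    using hC t

theorem integrableOn_exp_neg_mul_cpow_sub_one_div {w : ℂ} (hw : -1 < w.re) :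
    IntegrableOn (fun t : ℝ ↦ (Real.exp (-t) : ℂ) * (((t : ℂ) ^ w - 1) / ((t : ℂ) - 1)))
      (Ioi 0) := by
  obtain ⟨C, hC⟩ := exists_norm_cpow_sub_one_div_sub_one_le w
  have hGamma : IntegrableOn (fun t : ℝ ↦ Real.exp (-t) * t ^ w.re) (Ioi 0) := by
    simpa using Real.GammaIntegral_convergent (s := w.re + 1) (by linarith)
  have hbound := (hGamma.add (integrableOn_exp_neg_Ioi 0)).const_mul C
  refine hbound.mono' (Measurable.aestronglyMeasurable (by fun_prop)) ?_
  filter_upwards [ae_restrict_mem measurableSet_Ioi] with t ht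
  rw [norm_mul, Complex.norm_of_nonneg (Real.exp_pos _).le]
  calc Real.exp (-t) * ‖((t : ℂ) ^ w - 1) / ((t : ℂ) - 1)‖
      ≤ Real.exp (-t) * (C * (t ^ w.re + 1)) := by gcongr; exact hC t ht
    _ = C * (Real.exp (-t) * t ^ w.re + Real.exp (-t)) := by ring

theorem cpow_add_one_sub_one_div_sub_one {x : ℂ} (hx₀ : x ≠ 0) (hx₁ : x ≠ 1) (w : ℂ) :
    (x ^ (w + 1) - 1) / (x - 1) = (x ^ w - 1) / (x - 1) + x ^ w := by
  have : x - 1 ≠ 0 := sub_ne_zero.2 hx₁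
  rw [Complex.cpow_add _ _ hx₀, Complex.cpow_one]
  field_simp
  ring

theorem kurepa_add_one {w : ℂ} (hw : -1 < w.re) :
    kurepa (w + 1) = kurepa w + Complex.Gamma (w + 1) := by
  have hpos : 0 < (w + 1).re := by
    rw [Complex.add_re, Complex.one_re]
    linarith
  rw [Complex.Gamma_eq_integral hpos, Complex.GammaIntegral, kurepa, kurepa,
    ← integral_add (integrableOn_exp_neg_mul_cpow_sub_one_div hw)
      (Complex.GammaIntegral_convergent hpos)]
  refine integral_congr_ae ?_
  filter_upwards [ae_restrict_mem measurableSet_Ioi, ae_restrict_of_ae (Measure.ae_ne volume 1)]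
    with t ht₀ ht₁
  rw [cpow_add_one_sub_one_div_sub_one (Complex.ofReal_ne_zero.2 (ne_of_gt ht₀))
    (Complex.ofReal_ne_one.2 ht₁), add_sub_cancel_right, mul_add]

theorem kurepa_eq_kurepa_sub_nat_add_sum_Gamma {n : ℕ} {z : ℂ} (hz : (n : ℝ) - 1 < z.re) :
    kurepa z = kurepa (z - n) + ∑ j ∈ Finset.range n, Complex.Gamma (z - j) := by
  have hstep : ∀ j < n,
      Complex.Gamma (z - j) = kurepa (z - j) - kurepa (z - (j + 1 : ℕ)) := by
    intro j hj
    have hjn : (j : ℝ) + 1 ≤ n := mod_cast hj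
    have hre : -1 < (z - (j + 1 : ℕ)).re := by
      rw [Complex.sub_re, Complex.natCast_re]
      push_cast
      linarith
    have hshift : z - (j + 1 : ℕ) + 1 = z - j := by
      push_cast
      ring
    have hrec := kurepa_add_one hre
    rw [hshift] at hrec
    rw [hrec, add_sub_cancel_left]
  rw [Finset.sum_congr rfl fun j hj ↦ hstep j (Finset.mem_range.1 hj),
    Finset.sum_range_sub' (fun j : ℕ ↦ kurepa (z - j)), Nat.cast_zero, sub_zero,
    add_sub_cancel]

theorem prod_one_div_sub_mul_Gamma_add_one {m : ℕ} {z : ℂ} (hz : ∀ i < m, z ≠ i) :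
    (∏ i ∈ Finset.range m, 1 / (z - i)) * Complex.Gamma (z + 1) = Complex.Gamma (z - m + 1) := by
  induction m with
  | zero => simp
  | succ m ih =>
    have hm : z - m ≠ 0 := sub_ne_zero.2 (hz m m.lt_succ_self)
    calc (∏ i ∈ Finset.range (m + 1), 1 / (z - i)) * Complex.Gamma (z + 1)
        = 1 / (z - m) * Complex.Gamma (z - m + 1) := by
          rw [← ih fun i hi ↦ hz i (hi.trans m.lt_succ_self), Finset.prod_range_succ]
          ring
      _ = Complex.Gamma (z - m) := by
          rw [Complex.Gamma_add_one _ hm, ← mul_assoc, one_div_mul_cancel hm, one_mul]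
      _ = Complex.Gamma (z - (m + 1 : ℕ) + 1) := by
          push_cast
          ring_nf

theorem kurepaQ_sub_one_mul_Gamma_add_one {n : ℕ} {z : ℂ} (hz : ∀ i < n, z ≠ i) :
    (kurepaQ n z - 1) * Complex.Gamma (z + 1) =
      ∑ j ∈ Finset.range n, Complex.Gamma (z - j) := by
  rw [kurepaQ, add_sub_cancel_left, Finset.sum_mul]
  refine Finset.sum_congr rfl fun j hj ↦ ?_
  have hj : j < n := Finset.mem_range.1 hj
  rw [prod_one_div_sub_mul_Gamma_add_one fun i hi ↦ hz i (by lia)]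
  push_cast
  ring_nf

theorem kurepa_eq_kurepa_sub_nat_add_Q_mul_Gamma_general
    (n : ℕ) (z : ℂ) (hz : (n : ℝ) - 1 < z.re) :
    kurepa z = kurepa (z - n) + (kurepaQ n z - 1) * Complex.Gamma (z + 1) := by
  have hne : ∀ i < n, z ≠ i := by
    rintro i hi rfl
    have hin : (i : ℝ) + 1 ≤ n := mod_cast hi
    rw [Complex.natCast_re] at hz
    linarith
  rw [kurepaQ_sub_one_mul_Gamma_add_one hne, kurepa_eq_kurepa_sub_nat_add_sum_Gamma hz]

/-- For `n ≥ 1` and `Re z > n`, Kurepa's function satisfies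
`K(z) = K(z - n) + (Q_n(z) - 1) Γ(z + 1)`. -/
theorem kurepa_eq_kurepa_sub_nat_add_Q_mul_Gamma
    (n : ℕ) (hn : 1 ≤ n) (z : ℂ) (hz : (n : ℝ) < z.re) :
    kurepa z = kurepa (z - n) + (kurepaQ n z - 1) * Complex.Gamma (z + 1) := by
  exact kurepa_eq_kurepa_sub_nat_add_Q_mul_Gamma_general n z (by linarith)
end

section
/- For every real number x ∈ [0, 1], the real Gamma function satisfies Γ(x + 1/2) < x² − (7/4)·x + 9/5. -/
/-! The function `Γ` is convex on `(0, ∞)`, so on `[1/2, 1]` it lies below the chord through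
`Γ(1/2) = √π` and `Γ(1) = 1`, and on `[1, 2]` below the chord through `Γ(1) = Γ(2) = 1`. Against
either chord the claim becomes a quadratic inequality with negative discriminant. -/

open Real Set

theorem Gamma_le_chord_of_mem_Icc_half_one {x : ℝ} (hx : x ∈ Icc (1 / 2) 1) :
    Gamma x ≤ 2 * (1 - x) * √π + (2 * x - 1) :=
  calc
    Gamma x = Gamma (2 * (1 - x) * (1 / 2) + (2 * x - 1) * 1) := by congr 1; ring
    _ ≤ 2 * (1 - x) * Gamma (1 / 2) + (2 * x - 1) * Gamma 1 :=
      convexOn_Gamma.2 (mem_Ioi.2 one_half_pos) (mem_Ioi.2 one_pos)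
        (by linarith [hx.2]) (by linarith [hx.1]) (by ring)
    _ = 2 * (1 - x) * √π + (2 * x - 1) := by rw [Gamma_one_half_eq, Gamma_one, mul_one]

theorem Gamma_le_one_of_mem_Icc_one_two {x : ℝ} (hx : x ∈ Icc 1 2) : Gamma x ≤ 1 := by
  simpa using convexOn_Gamma.le_max_of_mem_Icc (mem_Ioi.2 one_pos) (mem_Ioi.2 two_pos) hx

theorem sqrt_pi_lt_sixteen_ninths : √π < 16 / 9 :=
  (sqrt_lt' (by norm_num)).2 (pi_lt_d2.trans (by norm_num))

theorem Gamma_add_half_lt_general (x : ℝ) (hx : x ∈ Icc (0 : ℝ) (3 / 2)) :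
    Gamma (x + 1 / 2) < x ^ 2 - (7 / 4) * x + 9 / 5 := by
  obtain ⟨hx₀, hx₁⟩ := hx
  rcases le_total x (1 / 2) with hx_half | hx_half
  · calc
      Gamma (x + 1 / 2) ≤ 2 * (1 - (x + 1 / 2)) * √π + (2 * (x + 1 / 2) - 1) :=
        Gamma_le_chord_of_mem_Icc_half_one ⟨by linarith, by linarith⟩
      _ ≤ 2 * (1 - (x + 1 / 2)) * (16 / 9) + (2 * (x + 1 / 2) - 1) := by
        gcongr
        · linarith
        · exact sqrt_pi_lt_sixteen_ninths.le
      _ < x ^ 2 - (7 / 4) * x + 9 / 5 := by nlinarith [sq_nonneg (x - 7 / 72)]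
  · calc
      Gamma (x + 1 / 2) ≤ 1 := Gamma_le_one_of_mem_Icc_one_two ⟨by linarith, by linarith⟩
      _ < x ^ 2 - (7 / 4) * x + 9 / 5 := by nlinarith [sq_nonneg (x - 7 / 8)]

/-- For `x ∈ [0,1]`, the real Gamma function satisfies
`Γ(x + 1/2) < x² - (7/4) x + 9/5`. -/
theorem Gamma_add_half_lt (x : ℝ) (hx : x ∈ Set.Icc (0 : ℝ) 1) :
    Real.Gamma (x + 1 / 2) < x ^ 2 - (7 / 4) * x + 9 / 5 :=
  Gamma_add_half_lt_general x (Icc_subset_Icc_right (by norm_num) hx)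
end

section
/- For every real number x ∈ [0, 1], the integral ∫₀^∞ e^{-t} · t^x · (log t)/(t − 1) dt (which equals the derivative K′(x) of Kurepa's function, with the integrand extended by continuity at t = 1) is at most Γ(x + 1/2), where Γ is the real Gamma function. -/
open MeasureTheory Set

/-!
Writing `u = log √t`, one has `log t / (t - 1) = (√t)⁻¹ * (u / sinh u)` for `t ≠ 1`, and
`u / sinh u` lies in `[0, 1]`. So the integrand is nonnegative and at most `e^{-t} t^{x - 1/2}`,
the integrand of Euler's integral for `Γ(x + 1/2)`.
-/

lemma div_sinh_nonneg (u : ℝ) : 0 ≤ u / Real.sinh u := by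
  rcases le_total 0 u with hu | hu
  · exact div_nonneg hu (Real.sinh_nonneg_iff.2 hu)
  · exact div_nonneg_of_nonpos hu (Real.sinh_nonpos_iff.2 hu)

lemma div_sinh_le_one (u : ℝ) : u / Real.sinh u ≤ 1 := by
  rcases le_total 0 u with hu | hu
  · exact div_le_one_of_le₀ (Real.self_le_sinh_iff.2 hu) (Real.sinh_nonneg_iff.2 hu)
  · exact div_le_one_of_ge (Real.sinh_le_self_iff.2 hu) (Real.sinh_nonpos_iff.2 hu)

-- At `t = 1` both sides are `0`, since `0 / 0 = 0`.
lemma log_div_sub_one_eq_inv_sqrt_mul_div_sinh {t : ℝ} (ht : 0 < t) :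
    Real.log t / (t - 1) = (√t)⁻¹ * (Real.log √t / Real.sinh (Real.log √t)) := by
  have hsqrt : 0 < √t := Real.sqrt_pos.2 ht
  have hlog : Real.log t = 2 * Real.log √t := by rw [Real.log_sqrt ht.le]; ring
  have hsub : t - 1 = 2 * (√t * Real.sinh (Real.log √t)) := by
    rw [Real.sinh_log hsqrt]
    field_simp
    rw [Real.sq_sqrt ht.le]
  rw [hlog, hsub, mul_div_mul_left _ _ two_ne_zero, div_mul_eq_div_div_swap, div_eq_inv_mul]

lemma log_div_sub_one_nonneg {t : ℝ} (ht : 0 < t) : 0 ≤ Real.log t / (t - 1) := by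
  rw [log_div_sub_one_eq_inv_sqrt_mul_div_sinh ht]
  exact mul_nonneg (inv_nonneg.2 (Real.sqrt_nonneg t)) (div_sinh_nonneg _)

lemma log_div_sub_one_le_inv_sqrt {t : ℝ} (ht : 0 < t) : Real.log t / (t - 1) ≤ (√t)⁻¹ := by
  rw [log_div_sub_one_eq_inv_sqrt_mul_div_sinh ht]
  exact mul_le_of_le_one_right (inv_nonneg.2 (Real.sqrt_nonneg t)) (div_sinh_le_one _)

lemma rpow_mul_inv_sqrt {t : ℝ} (ht : 0 < t) (x : ℝ) : t ^ x * (√t)⁻¹ = t ^ (x - 1 / 2) := by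
  rw [← div_eq_mul_inv, Real.sqrt_eq_rpow, ← Real.rpow_sub ht]

theorem kurepa_deriv_integral_le_Gamma_general {x : ℝ} (hx : -1 / 2 < x) :
    (∫ t in Ioi (0 : ℝ), Real.exp (-t) * t ^ x * (Real.log t / (t - 1)))
      ≤ Real.Gamma (x + 1 / 2) := by
  have hpos : 0 < x + 1 / 2 := by linarith
  rw [Real.Gamma_eq_integral hpos]
  refine setIntegral_mono_of_nonneg (fun t (ht : 0 < t) ↦ ?nonneg) (fun t (ht : 0 < t) ↦ ?le)
    (Real.GammaIntegral_convergent hpos)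
  case nonneg =>
    exact mul_nonneg (by positivity) (log_div_sub_one_nonneg ht)
  case le =>
    calc Real.exp (-t) * t ^ x * (Real.log t / (t - 1))
      _ ≤ Real.exp (-t) * t ^ x * (√t)⁻¹ := by
        gcongr
        exact log_div_sub_one_le_inv_sqrt ht
      _ = Real.exp (-t) * t ^ (x - 1 / 2) := by
        rw [mul_assoc, rpow_mul_inv_sqrt ht]
      _ = Real.exp (-t) * t ^ (x + 1 / 2 - 1) := by
        ring_nf

/-- For `x ∈ [0,1]`, the integral `∫₀^∞ e^{-t} t^x (log t)/(t-1) dt`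
(the derivative of Kurepa's function) is at most `Γ(x + 1/2)`. -/
theorem kurepa_deriv_integral_le_Gamma (x : ℝ) (hx : x ∈ Set.Icc (0 : ℝ) 1) :
    (∫ t in Ioi (0 : ℝ), Real.exp (-t) * t ^ x * (Real.log t / (t - 1)))
      ≤ Real.Gamma (x + 1 / 2) :=
  kurepa_deriv_integral_le_Gamma_general (by linarith [hx.1])
end
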